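/- Let f : {0,1}^n → {0,1} be a Boolean function with at least two essential variables. Then gap f = 2 if and only if f is equivalent to one of the following polynomial functions over GF(2): (1) x_1 + x_2 + ⋯ + x_m + c for some m ≥ 2, (2) x_1·x_2 + x_1 + c, (3) x_1·x_2 + x_1·x_3 + x_2·x_3 + c, (4) x_1·x_2 + x_1·x_3 + x_2·x_3 + x_1 + x_2 + c, where c ∈ {0,1}. Otherwise gap f = 1. -/

import Mathlib

open Finset

section Defs

variable {A B : Type*}

/-- The `i`-th variable is essential in `f`. -/
def essentialAt {n : ℕ} (f : (Fin n → A) → B) (i : Fin n) : Prop :=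
  ∃ x x' : Fin n → A, (∀ k, k ≠ i → x k = x' k) ∧ f x ≠ f x'

/-- The essential arity of `f`: the number of its essential variables. -/
noncomputable def essArity {n : ℕ} (f : (Fin n → A) → B) : ℕ :=
  Nat.card {i : Fin n // essentialAt f i}

/-- The identification minor `f_{i ← j}`. -/
def idMinor {n : ℕ} (f : (Fin n → A) → B) (i j : Fin n) : (Fin n → A) → B :=
  fun x => f (Function.update x i (x j))

/-- The arity gap of `f`. -/
noncomputable def arityGap {n : ℕ} (f : (Fin n → A) → B) : ℕ :=
  sInf {d : ℕ | ∃ i j : Fin n, i ≠ j ∧ essentialAt f i ∧ essentialAt f j ∧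
    d = essArity f - essArity (idMinor f i j)}

/-- `oddsupp x` is the set of elements occurring an odd number of times in `x`. -/
def oddsupp {n : ℕ} [DecidableEq A] (x : Fin n → A) : Finset A :=
  (Finset.univ.image x).filter fun a => Odd ((Finset.univ.filter fun j => x j = a).card)

/-- `f` is determined by `oddsupp`. -/
def DeterminedByOddsupp {n : ℕ} [DecidableEq A] (f : (Fin n → A) → B) : Prop :=
  ∃ φ : Finset A → B, ∀ x, f x = φ (oddsupp x)

/-- `oddsuppOn I x = oddsupp (x|_I)`. -/
def oddsuppOn {n : ℕ} [DecidableEq A] (I : Finset (Fin n)) (x : Fin n → A) : Finset A :=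
  (I.image x).filter fun a => Odd ((I.filter fun j => x j = a).card)

/-- `f` is `k`-decomposable: a sum of functions with at most `k` essential variables. -/
def KDecomposable {n : ℕ} [AddCommMonoid B] (k : ℕ) (f : (Fin n → A) → B) : Prop :=
  ∃ (s : ℕ) (g : Fin s → (Fin n → A) → B),
    (∀ i, essArity (g i) ≤ k) ∧ ∀ x, f x = ∑ i, g i x

/-- Partial derivative of `f` with respect to its `i`-th variable with parameter `a`. -/
def pDeriv {n : ℕ} [AddCommGroup B] (f : (Fin n → A) → B) (i : Fin n) (a : A) :
    (Fin n → A) → B :=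
  fun x => f (Function.update x i a) - f x

/-- Higher-order partial derivative `Δ_I^a f`. -/
def pDerivFin {n : ℕ} [AddCommGroup B] (f : (Fin n → A) → B) (I : Finset (Fin n))
    (a : Fin n → A) : (Fin n → A) → B :=
  (I.sort (· ≤ ·)).foldr (fun i g => pDeriv g i (a i)) f

/-- `updateOn x J a` is the tuple `x_J^a`. -/
def updateOn {n : ℕ} (x : Fin n → A) (J : Finset (Fin n)) (a : Fin n → A) : Fin n → A :=
  fun k => if k ∈ J then a k else x k

/-- `g` is a simple minor of `f`. -/
def IsSimpleMinor {n m : ℕ} (g : (Fin m → A) → B) (f : (Fin n → A) → B) : Prop :=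
  ∃ σ : Fin n → Fin m, ∀ x : Fin m → A, g x = f (x ∘ σ)

/-- `f` and `g` are equivalent: each is a simple minor of the other. -/
def FnEquiv {n m : ℕ} (f : (Fin n → A) → B) (g : (Fin m → A) → B) : Prop :=
  IsSimpleMinor g f ∧ IsSimpleMinor f g

end Defs

/-!
Call the variable `m` killed by `i ← j` if `m ≠ i` and `f_{i ← j}` does not depend on it. When all
variables are essential, a gap of at least two means that every `i ← j` kills some variable. If it
is always the merged variable `j` itself, then `f` is invariant under flipping any two bits (with at
least three variables), so `f` only depends on the sum of its variables. Otherwise, since "`i ← j`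
kills `k`" is transitive in `i` and `k`, finiteness yields `i`, `j`, `k` such that `i ← j` kills `k`
while `k ← j` kills `i` or `j`. These two facts let `f` be evaluated on tuples that are constant on
`{i, j, k}`, and `k ← i` killing a variable forces this rounding to be a majority vote, with `k`
possibly negated. A fourth variable `l` cannot exist, because whatever `k ← l` kills would be
inessential in `f`. Conversely, every identification minor of the listed polynomials is, up to a
constant, a sum of all but two of the variables.
-/

section EssentialVariables

variable {A B : Type*} {n : ℕ} {f : (Fin n → A) → B} {i j k : Fin n}

theorem apply_update_of_not_essentialAt (h : ¬ essentialAt f i) (x : Fin n → A) (a : A) :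
    f (Function.update x i a) = f x := by
  by_contra hne
  exact h ⟨_, x, fun k hk => Function.update_of_ne hk a x, hne⟩

theorem apply_eq_of_not_essentialAt (h : ¬ essentialAt f i) {x y : Fin n → A}
    (hxy : ∀ k, k ≠ i → x k = y k) : f x = f y := by
  by_contra hne
  exact h ⟨x, y, hxy, hne⟩

theorem apply_eq_of_forall_essentialAt {x y : Fin n → A}
    (hxy : ∀ k, essentialAt f k → x k = y k) : f x = f y := by
  classical
  have hpw : ∀ S : Finset (Fin n), (∀ k ∈ S, ¬ essentialAt f k) → f (S.piecewise y x) = f x := by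
    intro S
    induction S using Finset.induction_on with
    | empty => simp
    | insert s S _ ih =>
      intro hS
      rw [Finset.piecewise_insert, apply_update_of_not_essentialAt (hS s (mem_insert_self s S))]
      exact ih fun k hk => hS k (mem_insert_of_mem hk)
  have hy : ({k | ¬ essentialAt f k} : Finset (Fin n)).piecewise y x = y := by
    funext k
    by_cases hk : essentialAt f k <;> simp [hk, hxy]
  rw [← hpw {k | ¬ essentialAt f k} (by simp), hy]

theorem essentialAt_iff_exists_update :
    essentialAt f i ↔ ∃ x a, f (Function.update x i a) ≠ f x := by
  constructor
  · contrapose!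
    intro h
    rintro ⟨x, y, hxy, hne⟩
    have hy : Function.update x i (y i) = y := Function.update_eq_iff.2 ⟨rfl, hxy⟩
    exact hne (by rw [← h x (y i), hy])
  · rintro ⟨x, a, hne⟩
    exact ⟨_, x, fun k hk => Function.update_of_ne hk a x, hne⟩

theorem essArity_eq_ncard (f : (Fin n → A) → B) : essArity f = {i | essentialAt f i}.ncard :=
  Nat.card_coe_set_eq _

theorem essArity_of_forall_essentialAt (h : ∀ i, essentialAt f i) : essArity f = n := by
  simp [essArity_eq_ncard, h]

theorem exists_essentialAt_ne_of_two_le_essArity (hf : 2 ≤ essArity f) :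
    ∃ i j, i ≠ j ∧ essentialAt f i ∧ essentialAt f j := by
  rw [essArity_eq_ncard] at hf
  obtain ⟨i, j, hi, hj, hij⟩ := (Set.one_lt_ncard_iff).1 hf
  exact ⟨i, j, hij, hi, hj⟩

end EssentialVariables

section IdentificationMinors

variable {A B : Type*} {n : ℕ} {f : (Fin n → A) → B} {i j k : Fin n}

theorem idMinor_apply_of_eq {x : Fin n → A} (hx : x i = x j) : idMinor f i j x = f x := by
  rw [idMinor, ← hx, Function.update_eq_self]

theorem not_essentialAt_idMinor_self (hij : i ≠ j) : ¬ essentialAt (idMinor f i j) i := by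
  rintro ⟨x, y, hxy, hne⟩
  refine hne (congrArg f ?_)
  funext t
  by_cases ht : t = i
  · simp [ht, hxy j hij.symm]
  · simp [ht, hxy t ht]

theorem essentialAt_of_essentialAt_idMinor (hj : essentialAt f j)
    (hk : essentialAt (idMinor f i j) k) : essentialAt f k := by
  obtain ⟨x, y, hxy, hne⟩ := hk
  by_cases hkj : k = j
  · exact hkj ▸ hj
  · refine ⟨_, _, fun t ht => ?_, hne⟩
    by_cases hti : t = i
    · simp [hti, hxy j (Ne.symm hkj)]
    · simp [hti, hxy t ht]

theorem setOf_essentialAt_idMinor_subset (hij : i ≠ j) (hj : essentialAt f j) :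
    {k | essentialAt (idMinor f i j) k} ⊆ {k | essentialAt f k} \ {i} :=
  fun _ hk => ⟨essentialAt_of_essentialAt_idMinor hj hk,
    fun hki => not_essentialAt_idMinor_self hij (hki ▸ hk)⟩

theorem essArity_idMinor_lt (hij : i ≠ j) (hi : essentialAt f i) (hj : essentialAt f j) :
    essArity (idMinor f i j) < essArity f := by
  rw [essArity_eq_ncard, essArity_eq_ncard]
  exact Set.ncard_lt_ncard
    ((setOf_essentialAt_idMinor_subset hij hj).trans_ssubset (Set.sdiff_singleton_ssubset.2 hi))

theorem arityGap_le (hij : i ≠ j) (hi : essentialAt f i) (hj : essentialAt f j) :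
    arityGap f ≤ essArity f - essArity (idMinor f i j) :=
  Nat.sInf_le ⟨i, j, hij, hi, hj, rfl⟩

theorem exists_arityGap_eq (hf : 2 ≤ essArity f) :
    ∃ i j, i ≠ j ∧ essentialAt f i ∧ essentialAt f j ∧
      arityGap f = essArity f - essArity (idMinor f i j) := by
  obtain ⟨i, j, hij, hi, hj⟩ := exists_essentialAt_ne_of_two_le_essArity hf
  exact Nat.sInf_mem (s := {d | ∃ i j, i ≠ j ∧ essentialAt f i ∧ essentialAt f j ∧
    d = essArity f - essArity (idMinor f i j)}) ⟨_, i, j, hij, hi, hj, rfl⟩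

theorem one_le_arityGap (hf : 2 ≤ essArity f) : 1 ≤ arityGap f := by
  obtain ⟨i, j, hij, hi, hj, hgap⟩ := exists_arityGap_eq hf
  have := essArity_idMinor_lt hij hi hj
  omega

end IdentificationMinors

section Equivalence

variable {A B : Type*} {n m p : ℕ}

theorem IsSimpleMinor.trans {f : (Fin n → A) → B} {g : (Fin m → A) → B} {h : (Fin p → A) → B} :
    IsSimpleMinor f g → IsSimpleMinor g h → IsSimpleMinor f h
  | ⟨σ, hσ⟩, ⟨τ, hτ⟩ => ⟨σ ∘ τ, fun x => by rw [hσ, hτ, Function.comp_assoc]⟩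

theorem FnEquiv.trans {f : (Fin n → A) → B} {g : (Fin m → A) → B} {h : (Fin p → A) → B}
    (hfg : FnEquiv f g) (hgh : FnEquiv g h) : FnEquiv f h :=
  ⟨hgh.1.trans hfg.1, hfg.2.trans hgh.2⟩

theorem FnEquiv.of_equiv {f : (Fin n → A) → B} {g : (Fin m → A) → B} (e : Fin m ≃ Fin n)
    (h : ∀ x, f x = g (x ∘ e)) : FnEquiv f g :=
  ⟨⟨e.symm, fun x => by simp [h, Function.comp_assoc]⟩, ⟨e, h⟩⟩

variable {g : (Fin m → A) → B} {τ : Fin m → Fin n}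

theorem essentialAt_comp_iff (hτ : τ.Injective) (a : Fin m) :
    essentialAt (fun x : Fin n → A => g (x ∘ τ)) (τ a) ↔ essentialAt g a := by
  constructor
  · rintro ⟨x, y, hxy, hne⟩
    exact ⟨x ∘ τ, y ∘ τ, fun b hb => hxy (τ b) (hτ.ne hb), hne⟩
  · rintro ⟨x, y, hxy, hne⟩
    refine ⟨Function.extend τ x fun _ => x a, Function.extend τ y fun _ => x a, ?_, ?_⟩
    · intro k hk
      by_cases hrange : ∃ b, τ b = k
      · obtain ⟨b, rfl⟩ := hrange
        rw [hτ.extend_apply, hτ.extend_apply]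
        exact hxy b fun hba => hk (congrArg τ hba)
      · rw [Function.extend_apply' _ _ _ hrange, Function.extend_apply' _ _ _ hrange]
    · simpa only [Function.extend_comp hτ] using hne

theorem setOf_essentialAt_comp (hτ : τ.Injective) :
    {i | essentialAt (fun x : Fin n → A => g (x ∘ τ)) i} = τ '' {a | essentialAt g a} := by
  ext i
  constructor
  · intro hi
    obtain ⟨a, rfl⟩ : ∃ a, τ a = i := by
      obtain ⟨x, y, hxy, hne⟩ := hi
      by_contra! hrange
      exact hne (congrArg g (funext fun a => hxy (τ a) (hrange a)))
    exact ⟨a, (essentialAt_comp_iff hτ a).1 hi, rfl⟩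
  · rintro ⟨a, ha, rfl⟩
    exact (essentialAt_comp_iff hτ a).2 ha

theorem essArity_comp (hτ : τ.Injective) :
    essArity (fun x : Fin n → A => g (x ∘ τ)) = essArity g := by
  rw [essArity_eq_ncard, setOf_essentialAt_comp hτ, Set.ncard_image_of_injective _ hτ,
    ← essArity_eq_ncard]

theorem idMinor_comp (hτ : τ.Injective) (a b : Fin m) :
    idMinor (fun x : Fin n → A => g (x ∘ τ)) (τ a) (τ b) = fun x => idMinor g a b (x ∘ τ) := by
  funext x
  simp only [idMinor, Function.update_comp_eq_of_injective _ hτ, Function.comp_apply]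

theorem arityGap_comp (hτ : τ.Injective) :
    arityGap (fun x : Fin n → A => g (x ∘ τ)) = arityGap g := by
  have hdiff (a b : Fin m) : essArity (fun x : Fin n → A => g (x ∘ τ)) -
      essArity (idMinor (fun x : Fin n → A => g (x ∘ τ)) (τ a) (τ b)) =
      essArity g - essArity (idMinor g a b) := by
    rw [idMinor_comp hτ, essArity_comp hτ, essArity_comp hτ]
  refine congrArg sInf (Set.ext fun d => ⟨?_, ?_⟩)
  · rintro ⟨i, j, hij, hi, hj, rfl⟩
    obtain ⟨a, ha, rfl⟩ := (setOf_essentialAt_comp hτ).subset hi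
    obtain ⟨b, hb, rfl⟩ := (setOf_essentialAt_comp hτ).subset hj
    exact ⟨a, b, fun hab => hij (congrArg τ hab), ha, hb, hdiff a b⟩
  · rintro ⟨a, b, hab, ha, hb, rfl⟩
    exact ⟨τ a, τ b, hτ.ne hab, (essentialAt_comp_iff hτ a).2 ha,
      (essentialAt_comp_iff hτ b).2 hb, (hdiff a b).symm⟩

theorem FnEquiv.arityGap_eq {f : (Fin n → A) → B} (hg : ∀ a, essentialAt g a)
    (hfg : FnEquiv f g) : arityGap f = arityGap g := by
  obtain ⟨⟨σ, hσ⟩, ⟨τ, hτ⟩⟩ := hfg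
  -- `g y = g (y ∘ σ ∘ τ)`, so an essential variable of `g` must lie in the range of `σ ∘ τ`.
  have hsurj : (σ ∘ τ).Surjective := by
    intro a
    obtain ⟨x, y, hxy, hne⟩ := hg a
    by_contra! hrange
    refine hne ?_
    rw [hσ, hσ, hτ, hτ]
    exact congrArg g (funext fun b => hxy _ (hrange b))
  have hinj : τ.Injective := (Finite.injective_iff_surjective.2 hsurj).of_comp
  rw [funext hτ, arityGap_comp hinj]

theorem exists_fnEquiv_forall_essentialAt (f : (Fin n → A) → B) (hf : essArity f ≠ 0) :
    ∃ g : (Fin (essArity f) → A) → B, (∀ a, essentialAt g a) ∧ FnEquiv f g := by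
  have : NeZero (essArity f) := ⟨hf⟩
  let e : {i // essentialAt f i} ≃ Fin (essArity f) := Finite.equivFin _
  let τ : Fin (essArity f) → Fin n := fun a => (e.symm a).1
  have hτ : τ.Injective := Subtype.val_injective.comp e.symm.injective
  have hess (a) : essentialAt f (τ a) := (e.symm a).2
  have hfactor : f = fun x => f ((x ∘ τ) ∘ Function.invFun τ) := by
    funext x
    refine apply_eq_of_forall_essentialAt fun i hi => ?_
    have hi' : τ (Function.invFun τ i) = i := Function.invFun_eq ⟨e ⟨i, hi⟩, by simp [τ]⟩
    simp only [Function.comp_apply, hi']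
  refine ⟨fun y => f (y ∘ Function.invFun τ), fun a => ?_,
    ⟨_, fun _ => rfl⟩, ⟨τ, congrFun hfactor⟩⟩
  have ha := hess a
  rw [hfactor] at ha
  exact (essentialAt_comp_iff (g := fun y => f (y ∘ Function.invFun τ)) hτ a).1 ha

end Equivalence

/-- Identifying the distinct variables `i` and `j` of `f` makes the `m`-th variable inessential.
The trivial case `m = i` is excluded because `f_{i ← j}` never depends on its `i`-th variable; for
`m = j` it is the merged variable that disappears. -/
structure IdMinorKills {A B : Type*} {n : ℕ} (f : (Fin n → A) → B) (i j m : Fin n) : Prop where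
  ne : i ≠ j
  killed_ne : m ≠ i
  not_essentialAt : ¬ essentialAt (idMinor f i j) m

section Kills

variable {A B : Type*} {n : ℕ} {f : (Fin n → A) → B} {i j k m : Fin n}

theorem exists_idMinorKills_of_two_le_arityGap (hgap : 2 ≤ arityGap f) (hij : i ≠ j)
    (hi : essentialAt f i) (hj : essentialAt f j) : ∃ m, IdMinorKills f i j m := by
  have hle := arityGap_le hij hi hj
  have hcard :
      {k | essentialAt (idMinor f i j) k}.ncard < ({k | essentialAt f k} \ {i}).ncard := by
    rw [Set.ncard_sdiff_singleton_of_mem (show i ∈ {k | essentialAt f k} from hi),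
      ← essArity_eq_ncard, ← essArity_eq_ncard]
    omega
  obtain ⟨m, ⟨-, hmi⟩, hm⟩ := Set.exists_mem_notMem_of_ncard_lt_ncard hcard
  exact ⟨m, hij, hmi, hm⟩

theorem IdMinorKills.apply_eq (h : IdMinorKills f i j m) {x y : Fin n → A} (hx : x i = x j)
    (hy : y i = y j) (hxy : ∀ t, t ≠ i → t ≠ m → x t = y t) : f x = f y := by
  calc
    f x = idMinor f i j x := (idMinor_apply_of_eq hx).symm
    _ = idMinor f i j (Function.update x i (y i)) :=
      (apply_update_of_not_essentialAt (not_essentialAt_idMinor_self h.ne) x (y i)).symm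
    _ = idMinor f i j y := apply_eq_of_not_essentialAt h.not_essentialAt fun t htm => by
      by_cases hti : t = i
      · rw [hti, Function.update_self]
      · rw [Function.update_of_ne hti, hxy t hti htm]
    _ = f y := idMinor_apply_of_eq hy

theorem IdMinorKills.apply_eq_updateOn_const (h : IdMinorKills f i j m) {x : Fin n → A} {a : A}
    {S : Finset (Fin n)} (hi : i ∈ S) (hj : j ∈ S) (hx : x i = x j)
    (hS : ∀ t ∈ S, t ≠ i → t ≠ m → x t = a) : f x = f (updateOn x S fun _ => a) := by
  refine h.apply_eq hx (by simp only [updateOn, hi, hj, if_true]) fun t hti htm => ?_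
  by_cases ht : t ∈ S
  · simp only [updateOn, ht, if_true, hS t ht hti htm]
  · simp only [updateOn, ht, if_false]

theorem IdMinorKills.trans (hk : IdMinorKills f i j k) (hm : IdMinorKills f k j m)
    (hmj : m ≠ j) (hmi : m ≠ i) : IdMinorKills f i j m := by
  refine ⟨hk.ne, hmi, ?_⟩
  rintro ⟨x, y, hxy, hne⟩
  have hreset (z : Fin n → A) :
      idMinor f i j z = f (Function.update (Function.update z k (z j)) i (z j)) := by
    rw [← apply_update_of_not_essentialAt hk.not_essentialAt z (z j), idMinor,
      Function.update_of_ne hm.ne.symm]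
  have hmerged (z : Fin n → A) : Function.update (Function.update z k (z j)) i (z j) k =
      Function.update (Function.update z k (z j)) i (z j) j := by
    simp [hk.killed_ne, hk.ne.symm, hm.ne.symm]
  refine hne ?_
  rw [hreset x, hreset y]
  refine hm.apply_eq (hmerged x) (hmerged y) fun t htk htm => ?_
  by_cases hti : t = i
  · simp [hti, hxy j hmj.symm]
  · simp [hti, htk, hxy t htm]

theorem exists_idMinorKills_back (hkills : ∀ i j, i ≠ j → ∃ m, IdMinorKills f i j m)
    {i₀ k₀ : Fin n} (h₀ : IdMinorKills f i₀ j k₀) (hk₀ : k₀ ≠ j) :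
    ∃ i k, k ≠ j ∧ IdMinorKills f i j k ∧ (IdMinorKills f k j j ∨ IdMinorKills f k j i) := by
  by_contra! hback
  -- If the conclusion fails, then `r` is a strict order with arbitrarily long descending chains.
  let r (k i : Fin n) : Prop := k ≠ j ∧ IdMinorKills f i j k
  have : Std.Irrefl r := ⟨fun _ h => h.2.killed_ne rfl⟩
  have : IsTrans (Fin n) r := ⟨fun m k i hm hk =>
    ⟨hm.1, hk.2.trans hm.2 hm.1 fun hmi => (hback i k hk.1 hk.2).2 (hmi ▸ hm.2)⟩⟩
  obtain ⟨k, ⟨i, hkj, hk⟩, hmax⟩ :=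
    (Finite.wellFounded_of_trans_of_irrefl r).has_min {k | ∃ i, r k i} ⟨k₀, i₀, hk₀, h₀⟩
  obtain ⟨m, hm⟩ := hkills k j hkj
  have hmj : m ≠ j := fun hmj => (hback i k hkj hk).1 (hmj ▸ hm)
  exact hmax m ⟨k, hmj, hm⟩ ⟨hmj, hm⟩

theorem not_essentialAt_of_round {S : Finset (Fin n)} {p : Fin n} (hk : k ∈ S) (hkp : k ≠ p)
    (h : ∀ x, f x = f (updateOn x S fun _ => x p)) : ¬ essentialAt f k := by
  rintro ⟨x, y, hxy, hne⟩
  refine hne ?_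
  rw [h x, h y, hxy p hkp.symm]
  congr 1
  funext t
  by_cases ht : t ∈ S
  · simp only [updateOn, ht, if_true]
  · simp only [updateOn, ht, if_false]
    exact hxy t fun htk => ht (htk ▸ hk)

theorem IdMinorKills.not_essentialAt_of_round {p : Fin n} (hki : IdMinorKills f k i m)
    (hmi : m ≠ i) (hmp : m ≠ p)
    (hround : ∀ x : Fin n → A, x k ≠ x i → f x = f (updateOn x {k, i, j} fun _ => x p)) :
    ¬ essentialAt f m := by
  rintro ⟨x, y, hxy, hne⟩
  have hk := hxy k hki.killed_ne.symm
  have hi := hxy i hmi.symm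
  refine hne ?_
  by_cases hx : x k = x i
  · exact hki.apply_eq hx (by rw [← hk, ← hi, hx]) fun t _ htm => hxy t htm
  · rw [hround x hx, hround y (by rwa [← hk, ← hi]), hxy p hmp.symm]
    exact hki.apply_eq (by simp [updateOn]) (by simp [updateOn]) fun t _ htm => by
      simp only [updateOn, hxy t htm]

end Kills

section PairwiseKilling

variable {n : ℕ} {B : Type*} {f : (Fin n → ZMod 2) → B}

theorem zmod_two_eq_or_eq_of_ne {a b : ZMod 2} (hab : a ≠ b) (c : ZMod 2) : c = a ∨ c = b := by
  decide +revert

theorem apply_add_single_add_single_of_eq {i j : Fin n} (h : IdMinorKills f i j j)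
    {x : Fin n → ZMod 2} (hx : x i = x j) : f (x + (Pi.single i 1 + Pi.single j 1)) = f x := by
  refine h.apply_eq ?_ hx fun t hti htj => ?_
  · simp [h.ne, h.ne.symm, hx]
  · simp [hti, htj]

theorem periodic_single_add_single (hn : 2 < n) (h : ∀ i j, i ≠ j → IdMinorKills f i j j)
    (i j : Fin n) : Function.Periodic f (Pi.single i 1 + Pi.single j 1) := by
  have hdouble (u : Fin n → ZMod 2) : u + u = 0 :=
    funext fun t => CharTwo.add_self_eq_zero (u t)
  intro x
  by_cases hij : i = j
  · rw [hij, hdouble, add_zero]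
  obtain ⟨l, hli, hlj⟩ := Fin.exists_ne_and_ne_of_two_lt i j hn
  -- If `x l = x i ≠ x j`, flip the equal pair `i, l` and then the pair `l, j`, which is now equal.
  have hflip {p q : Fin n} (hpq : p ≠ q) (hlp : l ≠ p) (hlq : l ≠ q) (hp : x p = x l)
      (hq : x p ≠ x q) : f (x + (Pi.single p 1 + Pi.single q 1)) = f x := by
    let y : Fin n → ZMod 2 := x + (Pi.single p 1 + Pi.single l 1)
    have hl : y l = x l + 1 := by simp [y, hlp]
    have hyq : y q = x q := by simp [y, hpq.symm, hlq.symm]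
    have hy : y l = y q := by
      rw [hl, hyq, ← hp]
      generalize x p = a, x q = b at hq
      decide +revert
    have hsum : x + (Pi.single p 1 + Pi.single q 1) = y + (Pi.single l 1 + Pi.single q 1) := by
      linear_combination (exp := 1) - hdouble (Pi.single l 1)
    rw [hsum, apply_add_single_add_single_of_eq (h l q hlq) hy,
      apply_add_single_add_single_of_eq (h p l hlp.symm) hp]
  by_cases hx : x i = x j
  · exact apply_add_single_add_single_of_eq (h i j hij) hx
  rcases zmod_two_eq_or_eq_of_ne hx (x l) with hl | hl
  · exact hflip hij hli hlj hl.symm hx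
  · rw [add_comm (Pi.single i 1)]
    exact hflip (Ne.symm hij) hlj hli hl.symm (Ne.symm hx)

theorem periodic_of_sum_eq_zero (hn : 2 < n) (h : ∀ i j, i ≠ j → IdMinorKills f i j j)
    {v : Fin n → ZMod 2} (hv : ∑ t, v t = 0) : Function.Periodic f v := by
  have : NeZero n := ⟨by omega⟩
  have hzero : Function.Periodic f 0 := fun x => by rw [add_zero]
  have hdecomp : v = ∑ t, v t • (Pi.single t 1 + Pi.single 0 1) := by
    simp only [smul_add, sum_add_distrib, ← sum_smul, hv, zero_smul, add_zero]
    simp only [← Pi.single_smul, smul_eq_mul, mul_one, univ_sum_single]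
  rw [hdecomp]
  refine sum_induction _ (Function.Periodic f) (fun _ _ => .add_period) hzero fun t _ => ?_
  rcases zmod_two_eq_or_eq_of_ne zero_ne_one (v t) with ht | ht
  · rwa [ht, zero_smul]
  · rw [ht, one_smul]
    exact periodic_single_add_single hn h t 0

theorem factorsThrough_sum (hn : 2 < n) (h : ∀ i j, i ≠ j → IdMinorKills f i j j) :
    Function.FactorsThrough f fun x => ∑ t, x t := by
  intro x y hxy
  have hv : ∑ t, (y - x) t = 0 := by simp [sum_sub_distrib, hxy]
  rw [← periodic_of_sum_eq_zero hn h hv x, add_sub_cancel]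

end PairwiseKilling

section Majority

variable {n : ℕ} {B : Type*} {f : (Fin n → ZMod 2) → B} {ε : ZMod 2} {i j k l m : Fin n}

/-- The majority vote of three bits. -/
def majority (a b c : ZMod 2) : ZMod 2 :=
  a * b + a * c + b * c

/-- `f x` depends only on the majority of the `k`-th, `i`-th and `j`-th variables and on the
remaining variables; here the `k`-th variable enters the majority negated when `ε = 1`. -/
def FactorsThroughMajority (f : (Fin n → ZMod 2) → B) (ε : ZMod 2) (k i j : Fin n) : Prop :=
  ∀ x y : Fin n → ZMod 2, (∀ t, t ≠ k → t ≠ i → t ≠ j → x t = y t) →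
    majority (x k + ε) (x i) (x j) = majority (y k + ε) (y i) (y j) → f x = f y

theorem majority_self_left (a b : ZMod 2) : majority a a b = a := by
  decide +revert

theorem majority_of_ne {a b : ZMod 2} (hab : a ≠ b) (c : ZMod 2) : majority a b c = c := by
  decide +revert

theorem majority_swap (a b c : ZMod 2) : majority a b c = majority a c b := by
  unfold majority
  ring

theorem majority_self_right (a b : ZMod 2) : majority a b b = b := by
  decide +revert

theorem FactorsThroughMajority.symm (h : FactorsThroughMajority f ε k i j) :
    FactorsThroughMajority f ε k j i := fun x y hxy hmaj =>
  h x y (fun t hk hi hj => hxy t hk hj hi) (by rwa [majority_swap, majority_swap (y k + ε)])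

theorem factorsThroughMajority_of_round
    (h : ∀ x, f x = f (updateOn x {k, i, j} fun _ => majority (x k + ε) (x i) (x j))) :
    FactorsThroughMajority f ε k i j := by
  intro x y hxy hmaj
  rw [h x, h y, hmaj]
  congr 1
  funext t
  by_cases ht : t ∈ ({k, i, j} : Finset (Fin n))
  · simp only [updateOn, ht, if_true]
  · simp only [mem_insert, mem_singleton, not_or] at ht
    simp [updateOn, ht, hxy t ht.1 ht.2.1 ht.2.2]

theorem IdMinorKills.apply_eq_round_left (hij : IdMinorKills f i j k)
    (hkj : IdMinorKills f k j j) {x : Fin n → ZMod 2} (hx : x k ≠ x i) :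
    f x = f (updateOn x {k, i, j} fun _ => x i) := by
  rcases zmod_two_eq_or_eq_of_ne hx (x j) with hj | hj
  · exact hkj.apply_eq_updateOn_const (by simp) (by simp) hj.symm (by simp +contextual)
  · exact hij.apply_eq_updateOn_const (by simp) (by simp) hj.symm (by simp +contextual [hj])

theorem IdMinorKills.apply_eq_round_right (hij : IdMinorKills f i j k)
    (hkj : IdMinorKills f k j i) {x : Fin n → ZMod 2} (hx : x k ≠ x i) :
    f x = f (updateOn x {k, i, j} fun _ => x j) := by
  rcases zmod_two_eq_or_eq_of_ne hx (x j) with hj | hj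
  · exact hkj.apply_eq_updateOn_const (by simp) (by simp) hj.symm (by simp +contextual)
  · exact hij.apply_eq_updateOn_const (by simp) (by simp) hj.symm (by simp +contextual)

theorem factorsThroughMajority_one (hij : IdMinorKills f i j k) (hkj : IdMinorKills f k j j)
    (hki : IdMinorKills f k i i) : FactorsThroughMajority f 1 k i j := by
  refine factorsThroughMajority_of_round fun x => ?_
  by_cases hx : x k = x i
  · rw [majority_of_ne (by simp [hx])]
    exact hki.apply_eq_updateOn_const (by simp) (by simp) hx (by simp +contextual)
  · have hflip : x k + 1 = x i := by
      generalize x k = a, x i = b at hx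
      decide +revert
    rw [hflip, majority_self_left]
    exact hij.apply_eq_round_left hkj hx

theorem factorsThroughMajority_zero (hij : IdMinorKills f i j k) (hkj : IdMinorKills f k j i)
    (hki : IdMinorKills f k i j) : FactorsThroughMajority f 0 k i j := by
  refine factorsThroughMajority_of_round fun x => ?_
  rw [add_zero]
  by_cases hx : x k = x i
  · rw [hx, majority_self_left]
    exact hki.apply_eq_updateOn_const (by simp) (by simp) hx (by simp +contextual)
  · rw [majority_of_ne hx]
    exact hij.apply_eq_round_right hkj hx

theorem exists_factorsThroughMajority (hess : ∀ t, essentialAt f t)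
    (hkills : ∀ i j, i ≠ j → ∃ m, IdMinorKills f i j m) (hij : IdMinorKills f i j k)
    (hkj : IdMinorKills f k j j ∨ IdMinorKills f k j i) :
    ∃ ε, FactorsThroughMajority f ε k i j := by
  obtain ⟨m, hki⟩ := hkills k i hij.killed_ne
  rcases hkj with hkj | hkj
  · by_cases hmi : m = i
    · exact ⟨1, factorsThroughMajority_one hij hkj (hmi ▸ hki)⟩
    · exact absurd (hess m)
        (hki.not_essentialAt_of_round hmi hmi fun _ => hij.apply_eq_round_left hkj)
  · by_cases hmj : m = j
    · exact ⟨0, factorsThroughMajority_zero hij hkj (hmj ▸ hki)⟩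
    by_cases hmi : m = i
    · refine absurd (hess k)
        (not_essentialAt_of_round (S := {k, i, j}) (by simp) hkj.ne fun x => ?_)
      by_cases hx : x k = x i
      · exact hki.apply_eq_updateOn_const (by simp) (by simp) hx (by simp +contextual [hmi])
      · exact hij.apply_eq_round_right hkj hx
    · exact absurd (hess m)
        (hki.not_essentialAt_of_round hmi hmj fun _ => hij.apply_eq_round_right hkj)

theorem FactorsThroughMajority.not_essentialAt_of_idMinorKills
    (h : FactorsThroughMajority f ε k i j) (hki : k ≠ i) (hkj : k ≠ j) (hli : l ≠ i) (hlj : l ≠ j)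
    (hkl : IdMinorKills f k l m) (hmi : m ≠ i) (hmj : m ≠ j) : ¬ essentialAt f m := by
  rintro ⟨x, y, hxy, hne⟩
  refine hne ?_
  let μ := majority (x k + ε) (x i) (x j)
  -- Voting `μ` at both `i` and `j` frees the `k`-th variable.
  have hreset (z : Fin n → ZMod 2) (hz : majority (z k + ε) (z i) (z j) = μ) :
      f z = f (Function.update (updateOn z {i, j} fun _ => μ) k (z l)) := by
    refine h _ _ (fun t hk hi hj => by simp [updateOn, hk, hi, hj]) ?_
    rw [hz]
    simp [updateOn, hki.symm, hkj.symm, majority_self_right]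
  have hy : majority (y k + ε) (y i) (y j) = μ := by
    rw [← hxy k hkl.killed_ne.symm, ← hxy i hmi.symm, ← hxy j hmj.symm]
  rw [hreset x rfl, hreset y hy]
  refine hkl.apply_eq ?_ ?_ fun t htk htm => ?_
  · simp [updateOn, hkl.ne.symm, hli, hlj]
  · simp [updateOn, hkl.ne.symm, hli, hlj]
  · simp [updateOn, htk, hxy t htm]

theorem FactorsThroughMajority.not_essentialAt_of_idMinorKills_voter
    (h : FactorsThroughMajority f ε k i j) (hki : k ≠ i) (hkj : k ≠ j) (hij : i ≠ j) (hli : l ≠ i)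
    (hlj : l ≠ j) (hkl : IdMinorKills f k l i) : ¬ essentialAt f i := by
  rintro ⟨x, y, hxy, hne⟩
  have hk := hxy k hki
  have hj := hxy j hij.symm
  have hdecides : x k + ε ≠ x j := by
    intro hx
    refine hne (h x y (fun t _ hti _ => hxy t hti) ?_)
    rw [majority_swap, majority_swap (y k + ε), ← hk, ← hj, hx, majority_self_left,
      majority_self_left]
  -- The votes of `k` and `j` cancel, also after making them disagree at a new value of `k`.
  have hreset (z : Fin n → ZMod 2) (hz : z k + ε ≠ z j) :
      f z = f (Function.update (Function.update z k (z l)) j (z l + ε + 1)) := by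
    refine h _ _ (fun t hk _ hj => by simp [hk, hj]) ?_
    rw [majority_swap, majority_of_ne hz, majority_swap, majority_of_ne] <;>
      simp [hkj, hij, hki.symm]
  refine hne ?_
  rw [hreset x hdecides, hreset y (by rwa [← hk, ← hj])]
  refine hkl.apply_eq ?_ ?_ fun t htk hti => ?_
  · simp [hkj, hkl.ne.symm, hlj]
  · simp [hkj, hkl.ne.symm, hlj]
  · by_cases htj : t = j
    · simp [htj, hxy l hli]
    · simp [htk, htj, hxy t hti]

theorem FactorsThroughMajority.eq_or_eq_or_eq (h : FactorsThroughMajority f ε k i j)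
    (hki : k ≠ i) (hkj : k ≠ j) (hij : i ≠ j) (hess : ∀ t, essentialAt f t)
    (hkills : ∀ i j, i ≠ j → ∃ m, IdMinorKills f i j m) (l : Fin n) : l = k ∨ l = i ∨ l = j := by
  by_contra! hl
  obtain ⟨hlk, hli, hlj⟩ := hl
  obtain ⟨m, hkl⟩ := hkills k l hlk.symm
  by_cases hmi : m = i
  · exact h.not_essentialAt_of_idMinorKills_voter hki hkj hij hli hlj (hmi ▸ hkl) (hess i)
  by_cases hmj : m = j
  · exact h.symm.not_essentialAt_of_idMinorKills_voter hkj hki hij.symm hlj hli (hmj ▸ hkl) (hess j)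
  · exact h.not_essentialAt_of_idMinorKills hki hkj hli hlj hkl hmi hmj (hess m)

end Majority

section Classification

variable {n m : ℕ} {f : (Fin n → ZMod 2) → ZMod 2} {ε : ZMod 2} {i j k : Fin n}

/-- `f` is equivalent to a polynomial of one of the four families of Boolean functions with arity
gap two. -/
def IsExceptional (f : (Fin n → ZMod 2) → ZMod 2) : Prop :=
  ∃ c : ZMod 2,
    (∃ m : ℕ, 2 ≤ m ∧ FnEquiv f (fun x : Fin m → ZMod 2 => (∑ i, x i) + c)) ∨
    FnEquiv f (fun x : Fin 2 → ZMod 2 => x 0 * x 1 + x 0 + c) ∨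
    FnEquiv f (fun x : Fin 3 → ZMod 2 => x 0 * x 1 + x 0 * x 2 + x 1 * x 2 + c) ∨
    FnEquiv f (fun x : Fin 3 → ZMod 2 =>
      x 0 * x 1 + x 0 * x 2 + x 1 * x 2 + x 0 + x 1 + c)

theorem IsExceptional.of_fnEquiv {g : (Fin m → ZMod 2) → ZMod 2} (hfg : FnEquiv f g) :
    IsExceptional g → IsExceptional f
  | ⟨c, h⟩ => ⟨c, h.imp (fun ⟨m, hm, h⟩ => ⟨m, hm, hfg.trans h⟩)
      (.imp hfg.trans (.imp hfg.trans hfg.trans))⟩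

theorem exists_eq_add_of_factorsThrough {X : Type*} {f s : X → ZMod 2}
    (h : Function.FactorsThrough f s) {x y : X} (hne : f x ≠ f y) : ∃ c, ∀ z, f z = s z + c := by
  have hs : s x ≠ s y := fun hs => hne (h hs)
  have hxy : f y - s y = f x - s x := by
    generalize f x = a, f y = b, s x = a', s y = b' at hne hs
    decide +revert
  refine ⟨f x - s x, fun z => ?_⟩
  rcases zmod_two_eq_or_eq_of_ne hs (s z) with hz | hz
  · rw [h hz, hz, add_sub_cancel]
  · rw [h hz, hz, ← hxy, add_sub_cancel]

theorem isExceptional_of_two_variables {f : (Fin 2 → ZMod 2) → ZMod 2} (hess : essentialAt f 0)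
    (hdiag : f ![0, 0] = f ![1, 1]) : IsExceptional f := by
  have hcases (F : ZMod 2 → ZMod 2 → ZMod 2) (hF : F 0 0 = F 1 1) : ∃ c,
      (∀ a b, F a b = c) ∨ (∀ a b, F a b = a + b + c) ∨ (∀ a b, F a b = a * b + a + c) ∨
        ∀ a b, F a b = b * a + b + c := by
    decide +revert
  have heta (x : Fin 2 → ZMod 2) : f x = f ![x 0, x 1] := by
    congr 1
    ext t
    fin_cases t <;> rfl
  obtain ⟨c, hconst | hsum | hmul | hmul⟩ := hcases (fun a b => f ![a, b]) hdiag
  · obtain ⟨x, y, -, hne⟩ := hess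
    exact absurd (by rw [heta x, heta y, hconst, hconst]) hne
  · exact ⟨c, .inl ⟨2, le_rfl, .of_equiv (.refl _) fun x => by
      rw [heta, hsum, Fin.sum_univ_two]; rfl⟩⟩
  · exact ⟨c, .inr (.inl (.of_equiv (.refl _) fun x => by rw [heta, hmul]; rfl))⟩
  · exact ⟨c, .inr (.inl (.of_equiv (.swap 0 1) fun x => by rw [heta, hmul]; rfl))⟩

theorem FactorsThroughMajority.isExceptional (h : FactorsThroughMajority f ε k i j) (hki : k ≠ i)
    (hkj : k ≠ j) (hij : i ≠ j) (hcover : ∀ l, l = k ∨ l = i ∨ l = j) (hess : essentialAt f k) :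
    IsExceptional f := by
  obtain ⟨x, y, -, hne⟩ := hess
  have hs : Function.FactorsThrough f fun z => majority (z k + ε) (z i) (z j) :=
    fun x y hmaj => h x y (fun t hk hi hj => absurd (hcover t) (by tauto)) hmaj
  obtain ⟨c, hc⟩ := exists_eq_add_of_factorsThrough hs hne
  have hinj : Function.Injective ![i, j, k] := by
    simp [Function.Injective, Fin.forall_fin_succ, hki, hki.symm, hkj, hkj.symm, hij, hij.symm]
  have hsurj : Function.Surjective ![i, j, k] := by
    intro l
    rcases hcover l with rfl | rfl | rfl
    exacts [⟨2, rfl⟩, ⟨0, rfl⟩, ⟨1, rfl⟩]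
  let e : Fin 3 ≃ Fin n := .ofBijective _ ⟨hinj, hsurj⟩
  have he : e 0 = i ∧ e 1 = j ∧ e 2 = k := ⟨rfl, rfl, rfl⟩
  rcases zmod_two_eq_or_eq_of_ne zero_ne_one ε with rfl | rfl
  · refine ⟨c, .inr (.inr (.inl (.of_equiv e fun x => ?_)))⟩
    simp only [hc, majority, Function.comp_apply, he]
    ring
  · refine ⟨c, .inr (.inr (.inr (.of_equiv e fun x => ?_)))⟩
    simp only [hc, majority, Function.comp_apply, he]
    ring

theorem isExceptional_of_forall_idMinorKills (hn : 2 ≤ n) (hess : ∀ t, essentialAt f t)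
    (hkills : ∀ i j, i ≠ j → ∃ m, IdMinorKills f i j m) : IsExceptional f := by
  by_cases hself : ∀ i j, i ≠ j → IdMinorKills f i j j
  · rcases hn.eq_or_lt with rfl | hn
    · refine isExceptional_of_two_variables (hess 0)
        ((hself 0 1 (by decide)).apply_eq rfl rfl fun t h0 h1 => ?_)
      omega
    · obtain ⟨x, y, -, hne⟩ := hess ⟨0, by omega⟩
      obtain ⟨c, hc⟩ := exists_eq_add_of_factorsThrough (factorsThrough_sum hn hself) hne
      exact ⟨c, .inl ⟨n, hn.le, .of_equiv (.refl _) hc⟩⟩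
  · push Not at hself
    obtain ⟨i₀, j, hij₀, hself⟩ := hself
    obtain ⟨k₀, hk₀⟩ := hkills i₀ j hij₀
    have hk₀j : k₀ ≠ j := fun hkj => hself (hkj ▸ hk₀)
    obtain ⟨i, k, hkj, hij, hback⟩ := exists_idMinorKills_back hkills hk₀ hk₀j
    obtain ⟨ε, hmaj⟩ := exists_factorsThroughMajority hess hkills hij hback
    have hcover := hmaj.eq_or_eq_or_eq hij.killed_ne hkj hij.ne hess hkills
    exact hmaj.isExceptional hij.killed_ne hkj hij.ne hcover (hess k)

end Classification

section GapTwo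

variable {n : ℕ} {A : Type*} [AddCancelCommMonoid A] [Nontrivial A]

theorem essentialAt_sum_add_iff (S : Finset (Fin n)) (c : A) (i : Fin n) :
    essentialAt (fun x : Fin n → A => ∑ t ∈ S, x t + c) i ↔ i ∈ S := by
  constructor
  · rintro ⟨x, y, hxy, hne⟩
    by_contra hi
    have hsum : ∑ t ∈ S, x t = ∑ t ∈ S, y t :=
      sum_congr rfl fun t ht => hxy t fun hti => hi (hti ▸ ht)
    exact hne (congrArg (· + c) hsum)
  · intro hi
    obtain ⟨a, ha⟩ := exists_ne (0 : A)
    refine essentialAt_iff_exists_update.2 ⟨0, a, ?_⟩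
    simpa [sum_update_of_mem hi] using ha

theorem essArity_sum_add (S : Finset (Fin n)) (c : A) :
    essArity (fun x : Fin n → A => ∑ t ∈ S, x t + c) = S.card := by
  simp only [essArity_eq_ncard, essentialAt_sum_add_iff, setOfPred_mem, Set.ncard_coe_finset]

theorem arityGap_eq_two_of_idMinor_eq_sum_add {f : (Fin n → A) → A} (hn : 2 ≤ n)
    (hess : ∀ i, essentialAt f i)
    (h : ∀ i j, i ≠ j → ∃ (S : Finset (Fin n)) (c : A), S.card + 2 = n ∧
      ∀ x, idMinor f i j x = ∑ t ∈ S, x t + c) : arityGap f = 2 := by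
  have hf := essArity_of_forall_essentialAt hess
  obtain ⟨i, j, hij, -, -, hgap⟩ := exists_arityGap_eq (hf.symm ▸ hn)
  obtain ⟨S, c, hcard, hminor⟩ := h i j hij
  rw [hgap, hf, funext hminor, essArity_sum_add]
  omega

theorem idMinor_sum_add_eq {R : Type*} [Semiring R] [CharP R 2] (c : R) {i j : Fin n} (hij : i ≠ j)
    (x : Fin n → R) : idMinor (fun x => ∑ t, x t + c) i j x = ∑ t ∈ univ \ {i, j}, x t + c := by
  have hj : j ∈ univ \ {i} := by simp [hij.symm]
  calc
    ∑ t, Function.update x i (x j) t + c = x j + ∑ t ∈ univ \ {i}, x t + c := by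
      rw [sum_update_of_mem (mem_univ i)]
    _ = x j + (x j + ∑ t ∈ (univ \ {i}) \ {j}, x t) + c := by
      rw [sum_eq_add_sum_sdiff_singleton_of_mem hj]
    _ = ∑ t ∈ univ \ {i, j}, x t + c := by
      rw [CharTwo.add_cancel_left, _root_.sdiff_sdiff_left, insert_eq, sup_eq_union]

theorem essentialAt_sum_add (c : A) (i : Fin n) :
    essentialAt (fun x : Fin n → A => ∑ t, x t + c) i :=
  (essentialAt_sum_add_iff univ c i).2 (mem_univ i)

theorem arityGap_sum_add {R : Type*} [Ring R] [Nontrivial R] [CharP R 2] (hn : 2 ≤ n) (c : R) :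
    arityGap (fun x : Fin n → R => ∑ t, x t + c) = 2 := by
  refine arityGap_eq_two_of_idMinor_eq_sum_add hn (essentialAt_sum_add c) fun i j hij =>
    ⟨univ \ {i, j}, c, ?_, idMinor_sum_add_eq c hij⟩
  rw [card_univ_sdiff, card_pair hij, Fintype.card_fin]
  omega

theorem essentialAt_mul_add (c : ZMod 2) (i : Fin 2) :
    essentialAt (fun x : Fin 2 → ZMod 2 => x 0 * x 1 + x 0 + c) i := by
  refine essentialAt_iff_exists_update.2 ?_
  decide +revert

theorem arityGap_mul_add (c : ZMod 2) :
    arityGap (fun x : Fin 2 → ZMod 2 => x 0 * x 1 + x 0 + c) = 2 := by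
  refine arityGap_eq_two_of_idMinor_eq_sum_add le_rfl (essentialAt_mul_add c) ?_
  unfold idMinor
  decide +revert

theorem essentialAt_majority_add (c : ZMod 2) (i : Fin 3) :
    essentialAt (fun x : Fin 3 → ZMod 2 => x 0 * x 1 + x 0 * x 2 + x 1 * x 2 + c) i := by
  refine essentialAt_iff_exists_update.2 ?_
  decide +revert

theorem arityGap_majority_add (c : ZMod 2) :
    arityGap (fun x : Fin 3 → ZMod 2 => x 0 * x 1 + x 0 * x 2 + x 1 * x 2 + c) = 2 := by
  refine arityGap_eq_two_of_idMinor_eq_sum_add (by decide) (essentialAt_majority_add c) ?_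
  unfold idMinor
  decide +revert

theorem essentialAt_majority_not_add (c : ZMod 2) (i : Fin 3) :
    essentialAt (fun x : Fin 3 → ZMod 2 =>
      x 0 * x 1 + x 0 * x 2 + x 1 * x 2 + x 0 + x 1 + c) i := by
  refine essentialAt_iff_exists_update.2 ?_
  decide +revert

theorem arityGap_majority_not_add (c : ZMod 2) :
    arityGap (fun x : Fin 3 → ZMod 2 =>
      x 0 * x 1 + x 0 * x 2 + x 1 * x 2 + x 0 + x 1 + c) = 2 := by
  refine arityGap_eq_two_of_idMinor_eq_sum_add (by decide) (essentialAt_majority_not_add c) ?_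
  unfold idMinor
  decide +revert

theorem IsExceptional.arityGap_eq_two {f : (Fin n → ZMod 2) → ZMod 2} (h : IsExceptional f) :
    arityGap f = 2 := by
  obtain ⟨c, ⟨m, hm, h⟩ | h | h | h⟩ := h
  · rw [h.arityGap_eq (essentialAt_sum_add c), arityGap_sum_add hm]
  · rw [h.arityGap_eq (essentialAt_mul_add c), arityGap_mul_add]
  · rw [h.arityGap_eq (essentialAt_majority_add c), arityGap_majority_add]
  · rw [h.arityGap_eq (essentialAt_majority_not_add c), arityGap_majority_not_add]

theorem isExceptional_of_two_le_arityGap {f : (Fin n → ZMod 2) → ZMod 2} (hf : 2 ≤ essArity f)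
    (hgap : 2 ≤ arityGap f) : IsExceptional f := by
  obtain ⟨g, hess, hfg⟩ := exists_fnEquiv_forall_essentialAt f (by omega)
  rw [hfg.arityGap_eq hess] at hgap
  exact .of_fnEquiv hfg (isExceptional_of_forall_idMinorKills hf hess fun i j hij =>
    exists_idMinorKills_of_two_le_arityGap hgap hij (hess i) (hess j))

end GapTwo

theorem boolean_arity_gap_classification {n : ℕ} (f : (Fin n → ZMod 2) → ZMod 2)
    (hf : 2 ≤ essArity f) :
    (arityGap f = 2 ↔
      ∃ c : ZMod 2,
        (∃ m : ℕ, 2 ≤ m ∧ FnEquiv f (fun x : Fin m → ZMod 2 => (∑ i, x i) + c)) ∨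
        FnEquiv f (fun x : Fin 2 → ZMod 2 => x 0 * x 1 + x 0 + c) ∨
        FnEquiv f (fun x : Fin 3 → ZMod 2 => x 0 * x 1 + x 0 * x 2 + x 1 * x 2 + c) ∨
        FnEquiv f (fun x : Fin 3 → ZMod 2 =>
          x 0 * x 1 + x 0 * x 2 + x 1 * x 2 + x 0 + x 1 + c)) ∧
    (arityGap f = 2 ∨ arityGap f = 1) := by
  have hpos : 1 ≤ arityGap f := one_le_arityGap hf
  have hexc : 2 ≤ arityGap f → IsExceptional f := isExceptional_of_two_le_arityGap hf
  refine ⟨⟨fun hgap => hexc hgap.ge, IsExceptional.arityGap_eq_two⟩, ?_⟩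
  rcases hpos.eq_or_lt with hone | htwo
  · exact .inr hone.symm
  · exact .inl (hexc htwo).arityGap_eq_two
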